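/- arXiv:1607.08496 — 4 statements merged into one kernel-verified Lean document; each statement's English description precedes it below -/
import Mathlib

section
/- For every connected finite simple graph G on n ≥ 3 vertices, the node reliability polynomial NRel(G;p) has a nonreal complex root; that is, there exists p ∈ ℂ with p ∉ ℝ such that Σ_{k=1}^n c_k p^k (1−p)^{n−k} = 0. -/
open scoped Classical

/-- The number of connected sets (nonempty vertex subsets inducing a connected
subgraph) of order `k` in the finite simple graph `G`. -/
noncomputable def connCount {V : Type*} [Fintype V] (G : SimpleGraph V) (k : ℕ) : ℕ :=
  (Finset.univ.filter fun S : Finset V =>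
    S.card = k ∧ (G.induce (S : Set V)).Connected).card

/-- The node reliability polynomial `NRel(G;p) = ∑_{k=1}^n c_k p^k (1-p)^(n-k)`,
at a complex argument. -/
noncomputable def nodeRel {V : Type*} [Fintype V] (G : SimpleGraph V) (p : ℂ) : ℂ :=
  ∑ k ∈ Finset.Icc 1 (Fintype.card V),
    (connCount G k : ℂ) * p ^ k * (1 - p) ^ (Fintype.card V - k)

lemma connCount_le {V : Type*} [Fintype V] (G : SimpleGraph V) (k : ℕ) :
    connCount G k ≤ (Fintype.card V).choose k := by
  unfold connCount
  rw [← Finset.card_univ, ← Finset.card_powersetCard]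
  apply Finset.card_le_card
  intro S hS
  simp only [Finset.mem_filter] at hS
  simp [Finset.mem_powersetCard, hS.2.1]

lemma connCount_one {V : Type*} [Fintype V] (G : SimpleGraph V) :
    connCount G 1 = Fintype.card V := by
  apply le_antisymm
  · simpa using connCount_le G 1
  · unfold connCount
    have h : (Finset.univ.map ⟨fun v : V => ({v} : Finset V), Finset.singleton_injective⟩).card
        = Fintype.card V := by simp
    rw [← h]
    apply Finset.card_le_card
    intro S hS
    simp only [Finset.mem_map, Finset.mem_univ, true_and, Function.Embedding.coeFn_mk] at hS
    obtain ⟨v, rfl⟩ := hS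
    simp only [Finset.mem_filter, Finset.mem_univ, true_and, Finset.card_singleton]
    rw [Finset.coe_singleton]
    have : Subsingleton ({v} : Set V) := inferInstance
    have : Nonempty ({v} : Set V) := inferInstance
    exact ⟨SimpleGraph.Preconnected.of_subsingleton⟩

lemma connCount_card {V : Type*} [Fintype V] (G : SimpleGraph V) (hG : G.Connected) :
    connCount G (Fintype.card V) = 1 := by
  apply le_antisymm
  · simpa using connCount_le G (Fintype.card V)
  · unfold connCount
    rw [Nat.one_le_iff_ne_zero, ← Nat.pos_iff_ne_zero, Finset.card_pos]
    refine ⟨Finset.univ, ?_⟩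
    simp only [Finset.mem_filter, Finset.mem_univ, true_and, Finset.card_univ]
    rw [Finset.coe_univ]
    exact (SimpleGraph.induceUnivIso G).connected_iff.2 hG

open Polynomial in
/-- A monic polynomial with nonnegative coefficients satisfying suitable bounds has a nonreal
root. -/
lemma poly_nonreal_root (N : ℕ) (hN : 2 ≤ N) (c : ℕ → ℕ) (h0 : c 0 = N + 1)
    (h1 : 2 * c 1 ≤ (N + 1) * N) (h2 : c (N - 1) ≤ N + 1) (h3 : c N = 1) :
    ∃ x : ℂ, x.im ≠ 0 ∧ ∑ k ∈ Finset.range (N + 1), (c k : ℂ) * x ^ k = 0 := by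
  by_contra! hcon
  set Q : ℂ[X] := ∑ k ∈ Finset.range (N + 1), C (c k : ℂ) * X ^ k with hQ
  have heval : ∀ x, Q.eval x = ∑ k ∈ Finset.range (N + 1), (c k : ℂ) * x ^ k := by
    intro x; simp [hQ, eval_finsetSum]
  have hcoeff : ∀ j, j ≤ N → Q.coeff j = c j := by
    intro j hj
    simp only [hQ, finsetSum_coeff, coeff_C_mul, coeff_X_pow]
    rw [Finset.sum_eq_single j]
    · simp
    · intro b _ hb; simp [hb.symm]
    · intro h; simp at h; omega
  have hle : Q.natDegree ≤ N := by
    apply natDegree_sum_le_of_forall_le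
    intro k hk
    refine (natDegree_C_mul_X_pow_le _ _).trans ?_
    simp at hk; omega
  have hcN : Q.coeff N = 1 := by rw [hcoeff N le_rfl, h3]; simp
  have hdeg : Q.natDegree = N := by
    apply le_antisymm hle
    apply le_natDegree_of_ne_zero
    rw [hcN]; exact one_ne_zero
  have hmon : Q.Monic := by rw [Monic, leadingCoeff, hdeg, hcN]
  have hsp : Q.Splits := IsAlgClosed.splits Q
  have hcard : Q.roots.card = N := by rw [← hdeg]; exact hsp.natDegree_eq_card_roots.symm
  have hroot : ∀ r ∈ Q.roots, r.im = 0 ∧ r.re < 0 := by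
    intro r hr
    have hr0 : Q.eval r = 0 := (mem_roots'.1 hr).2
    have him : r.im = 0 := by
      by_contra h
      exact hcon r h (by rw [← heval, hr0])
    refine ⟨him, ?_⟩
    by_contra! hre
    have hrr : r = (r.re : ℂ) := by apply Complex.ext <;> simp [him]
    rw [heval, hrr] at hr0
    have : ∑ k ∈ Finset.range (N + 1), (c k : ℝ) * r.re ^ k = 0 := by exact_mod_cast hr0
    rw [Finset.sum_eq_zero_iff_of_nonneg (fun k _ => by positivity)] at this
    have := this 0 (by simp)
    simp [h0] at this
    norm_cast at this
  have hsum : Q.roots.sum = -(c (N - 1) : ℂ) := by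
    have := hsp.nextCoeff_eq_neg_sum_roots_of_monic hmon
    rw [nextCoeff_of_natDegree_pos (by omega), hdeg, hcoeff _ (by omega)] at this
    rw [this]; simp
  have hN0 : Q.eval 0 = (N : ℂ) + 1 := by
    rw [← coeff_zero_eq_eval_zero, hcoeff 0 (by omega), h0]; push_cast; rfl
  have hN1 : (N : ℂ) + 1 ≠ 0 := by exact_mod_cast Nat.succ_ne_zero N
  have hinv : (Q.roots.map fun z => 1 / (0 - z)).sum = (c 1 : ℂ) / (N + 1) := by
    rw [← hsp.eval_derivative_div_eval_of_ne_zero (by rw [hN0]; exact hN1), hN0]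
    congr 1
    rw [← coeff_zero_eq_eval_zero, coeff_derivative, hcoeff _ (by omega)]; simp
  have key : ∀ s : Multiset ℂ, (∀ r ∈ s, r.im = 0 ∧ r.re < 0) →
      4 * (s.card : ℝ) ≤ (-s.sum + 4 * (s.map fun z => 1 / (0 - z)).sum).re := by
    intro s
    induction s using Multiset.induction with
    | empty => simp
    | cons a s ih =>
      intro h
      have ih' := ih (fun r hr => h r (Multiset.mem_cons_of_mem hr))
      obtain ⟨ha, hb⟩ := h a (Multiset.mem_cons_self a s)
      have haa : a = (a.re : ℂ) := by apply Complex.ext <;> simp [ha]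
      have e : (1 / (0 - a)).re = 1 / (-a.re) := by
        rw [haa, zero_sub, ← Complex.ofReal_neg, ← Complex.ofReal_one, ← Complex.ofReal_div]
        simp
      have e4 : ∀ z : ℂ, (4 * z).re = 4 * z.re := by intro z; simp
      simp only [Complex.add_re, Complex.neg_re, Multiset.sum_cons, Multiset.map_cons,
        Multiset.card_cons, e4, e] at ih' ⊢
      push_cast
      have : 4 ≤ -a.re + 4 * (1 / (-a.re)) := by
        have hp : 0 < -a.re := by linarith
        generalize -a.re = t at hp
        rw [mul_one_div, ← sub_nonneg]
        have : t + 4 / t - 4 = (t - 2) ^ 2 / t := by field_simp; ring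
        rw [this]; positivity
      linarith
  have hk := key Q.roots hroot
  rw [hcard, hsum, hinv] at hk
  have hre : (-(-(c (N - 1) : ℂ)) + 4 * ((c 1 : ℂ) / (N + 1))).re
      = (c (N - 1) : ℝ) + 4 * ((c 1 : ℝ) / (N + 1)) := by
    have : (-(-(c (N - 1) : ℂ)) + 4 * ((c 1 : ℂ) / (N + 1)))
      = (((c (N - 1) : ℝ) + 4 * ((c 1 : ℝ) / (N + 1)) : ℝ) : ℂ) := by push_cast; ring
    rw [this, Complex.ofReal_re]
  rw [hre] at hk
  have h1' : (c 1 : ℝ) / (N + 1) ≤ N / 2 := by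
    rw [div_le_div_iff₀ (by positivity) (by norm_num)]
    have : (2 : ℝ) * c 1 ≤ (N + 1) * N := by exact_mod_cast h1
    linarith
  have h2' : (c (N - 1) : ℝ) ≤ N + 1 := by exact_mod_cast h2
  have : (2 : ℝ) ≤ N := by exact_mod_cast hN
  linarith

/-- For every connected finite simple graph on at least 3 vertices, the node reliability
polynomial has a nonreal complex root. -/
theorem nodeRel_has_nonreal_root {V : Type*} [Fintype V] (G : SimpleGraph V)
    (hG : G.Connected) (hn : 3 ≤ Fintype.card V) :
    ∃ p : ℂ, p.im ≠ 0 ∧ nodeRel G p = 0 := by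
  obtain ⟨N, hN⟩ : ∃ N, Fintype.card V = N + 1 := ⟨Fintype.card V - 1, by omega⟩
  have hN2 : 2 ≤ N := by omega
  obtain ⟨x, hx, hx0⟩ := poly_nonreal_root N hN2 (fun k => connCount G (k + 1))
    (by simp [connCount_one, hN])
    (by
      have := connCount_le G 2
      rw [hN, Nat.choose_two_right, Nat.add_sub_cancel] at this
      have h2 := Nat.div_mul_le_self ((N + 1) * N) 2
      show 2 * connCount G 2 ≤ _
      omega)
    (by
      have := connCount_le G N
      rw [hN, Nat.choose_succ_self_right] at this
      show connCount G (N - 1 + 1) ≤ _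
      rwa [Nat.sub_add_cancel (by omega)])
    (by
      show connCount G (N + 1) = 1
      rw [← hN]; exact connCount_card G hG)
  have h1x : 1 + x ≠ 0 := by
    intro h
    have := congrArg Complex.im h
    simp at this
    exact hx this
  have h1p : 1 - x / (1 + x) = 1 / (1 + x) := by field_simp; ring
  refine ⟨x / (1 + x), ?_, ?_⟩
  · intro h
    have hr : x / (1 + x) = ((x / (1 + x)).re : ℂ) := by
      apply Complex.ext
      · simp
      · rw [h]; simp
    set t := (x / (1 + x)).re
    have hxx : x = ((t / (1 - t) : ℝ) : ℂ) := by
      push_cast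
      rw [← hr, h1p]; field_simp
    apply hx
    rw [hxx, Complex.ofReal_im]
  · unfold nodeRel
    rw [hN, h1p, ← Finset.Ico_add_one_right_eq_Icc, Finset.sum_Ico_eq_sum_range]
    have : ∀ k ∈ Finset.range (N + 1 + 1 - 1), (connCount G (1 + k) : ℂ) * (x / (1 + x)) ^ (1 + k)
        * (1 / (1 + x)) ^ (N + 1 - (1 + k))
        = (x / (1 + x) ^ (N + 1)) * ((connCount G (k + 1) : ℂ) * x ^ k) := by
      intro k hk
      simp only [Finset.mem_range] at hk
      obtain ⟨j, rfl⟩ : ∃ j, N = k + j := ⟨N - k, by omega⟩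
      have e : k + j + 1 - (1 + k) = j := by omega
      rw [e, add_comm 1 k, div_pow, div_pow, one_pow]
      field_simp
      ring
    rw [Finset.sum_congr rfl this, ← Finset.mul_sum, Nat.add_sub_cancel, hx0, mul_zero]
end

section
/- For every integer n ≥ 2, the node reliability polynomial of the cycle graph C_{2n+1} evaluated at the real number p = 2n² − 1 is strictly negative: NRel(C_{2n+1}; 2n² − 1) < 0. -/
open scoped Classical

/-- The node reliability polynomial of `G` at a real argument `p`: the sum over all
connected sets `S` of `p^|S| * (1-p)^(N-|S|)`. -/
noncomputable def nodeRelR {V : Type*} [Fintype V] (G : SimpleGraph V) (p : ℝ) : ℝ :=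
  ∑ S ∈ Finset.univ.filter fun S : Finset V => (G.induce (S : Set V)).Connected,
    p ^ S.card * (1 - p) ^ (Fintype.card V - S.card)

section Arcs
open Fin.CommRing

/-- The arc of length `k` starting at `a`. -/
noncomputable def arc (M : ℕ) (a : Fin (M + 2)) (k : ℕ) : Finset (Fin (M + 2)) :=
  (Finset.range k).image fun i : ℕ => a + (i : Fin (M + 2))

theorem mem_arc {M : ℕ} {a x : Fin (M + 2)} {k : ℕ} :
    x ∈ arc M a k ↔ ∃ i < k, a + (i : Fin (M + 2)) = x := by
  simp [arc]

theorem card_arc {M : ℕ} (a : Fin (M + 2)) {k : ℕ} (hk : k ≤ M + 2) :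
    (arc M a k).card = k := by
  unfold arc
  rw [Finset.card_image_of_injOn, Finset.card_range]
  intro i hi j hj h
  simp only [Finset.coe_range, Set.mem_Iio] at hi hj
  have h2 : (i : Fin (M + 2)) = (j : Fin (M + 2)) := add_left_cancel h
  have h3 := congrArg Fin.val h2
  rw [Fin.val_natCast, Fin.val_natCast, Nat.mod_eq_of_lt (by omega),
    Nat.mod_eq_of_lt (by omega)] at h3
  exact h3

theorem arc_connected {M : ℕ} (a : Fin (M + 2)) {k : ℕ} (hk : 1 ≤ k) :
    ((SimpleGraph.cycleGraph (M + 2)).induce (arc M a k : Set (Fin (M + 2)))).Connected := by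
  have ha : a ∈ (arc M a k : Set (Fin (M + 2))) := by
    rw [Finset.mem_coe, mem_arc]; exact ⟨0, hk, by simp⟩
  have key : ∀ i : ℕ, ∀ hi : i < k,
      ((SimpleGraph.cycleGraph (M + 2)).induce (arc M a k : Set (Fin (M + 2)))).Reachable
        ⟨a, ha⟩ ⟨a + (i : Fin (M + 2)), by
          rw [Finset.mem_coe, mem_arc]; exact ⟨i, hi, rfl⟩⟩ := by
    intro i
    induction i with
    | zero => intro hi; simp
    | succ i ih =>
      intro hi
      refine (ih (by omega)).trans (SimpleGraph.Adj.reachable ?_)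
      rw [SimpleGraph.comap_adj, SimpleGraph.cycleGraph_adj]
      right
      simp
  rw [SimpleGraph.connected_iff_exists_forall_reachable]
  refine ⟨⟨a, ha⟩, ?_⟩
  rintro ⟨x, hx⟩
  obtain ⟨i, hi, rfl⟩ := mem_arc.1 (Finset.mem_coe.1 hx)
  exact key i hi

theorem pred_notMem_arc {M : ℕ} (a : Fin (M + 2)) {k : ℕ} (hk : k ≤ M + 1) :
    a - 1 ∉ arc M a k := by
  rw [mem_arc]
  rintro ⟨j, hj, h⟩
  have h2 : ((j + 1 : ℕ) : Fin (M + 2)) = 0 := by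
    push_cast
    linear_combination h
  rw [Fin.natCast_eq_zero] at h2
  have := Nat.le_of_dvd (by omega) h2
  omega

theorem arc_inj {M : ℕ} {a b : Fin (M + 2)} {k l : ℕ} (hk1 : 1 ≤ k) (hk : k ≤ M + 1)
    (hl : l ≤ M + 1) (h : arc M a k = arc M b l) : a = b ∧ k = l := by
  have hkl : k = l := by
    rw [← card_arc a (by omega : k ≤ M + 2), h, card_arc b (by omega)]
  refine ⟨?_, hkl⟩
  have ha : a ∈ arc M b l := by
    rw [← h, mem_arc]; exact ⟨0, hk1, by simp⟩
  obtain ⟨i, hi, hia⟩ := mem_arc.1 ha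
  rcases i with _ | i
  · simpa using hia.symm
  · exfalso
    apply pred_notMem_arc a hk
    rw [h, mem_arc]
    refine ⟨i, by omega, ?_⟩
    push_cast at hia
    linear_combination hia

theorem natCast_self_zero (M : ℕ) : ((M : Fin (M + 2)) + 2) = 0 := by
  have : ((M + 2 : ℕ) : Fin (M + 2)) = 0 := by rw [Fin.natCast_eq_zero]
  exact_mod_cast this

theorem closed_eq {V : Type*} (G : SimpleGraph V) (S T : Set V) (hS : (G.induce S).Connected)
    (a : V) (haS : a ∈ S) (haT : a ∈ T)
    (hcl : ∀ x ∈ T, ∀ y ∈ S, G.Adj x y → y ∈ T) : S ⊆ T := by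
  intro y hy
  obtain ⟨w⟩ := hS.preconnected ⟨a, haS⟩ ⟨y, hy⟩
  have : ∀ (u v : S), (G.induce S).Walk u v → (u : V) ∈ T → (v : V) ∈ T := by
    intro u v w
    induction w with
    | nil => exact id
    | cons h p ih =>
      intro hu
      exact ih (hcl _ hu _ (Subtype.property _) (by simpa using h))
  exact this _ _ w haT

theorem connected_is_arc {M : ℕ} (S : Finset (Fin (M + 2)))
    (hS : ((SimpleGraph.cycleGraph (M + 2)).induce (S : Set (Fin (M + 2)))).Connected)
    (hne : S ≠ Finset.univ) : ∃ a, ∃ k, 1 ≤ k ∧ k ≤ M + 1 ∧ S = arc M a k := by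
  obtain ⟨⟨s, hs⟩⟩ := hS.nonempty
  rw [Finset.mem_coe] at hs
  have h1 : ∃ a ∈ S, a - 1 ∉ S := by
    by_contra! hc
    apply hne
    have h2 : ∀ i : ℕ, s - (i : Fin (M + 2)) ∈ S := by
      intro i
      induction i with
      | zero => simpa using hs
      | succ i ih =>
        have := hc _ ih
        push_cast
        rwa [← sub_sub]
    rw [Finset.eq_univ_iff_forall]
    intro x
    have := h2 (s - x).val
    rw [Fin.cast_val_eq_self] at this
    simpa using this
  obtain ⟨a, ha, ha1⟩ := h1
  have hz := natCast_self_zero M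
  have hlast : a + ((M + 1 : ℕ) : Fin (M + 2)) ∉ S := by
    have : a + ((M + 1 : ℕ) : Fin (M + 2)) = a - 1 := by
      push_cast
      linear_combination hz
    rwa [this]
  have hex : ∃ k : ℕ, a + (k : Fin (M + 2)) ∉ S := ⟨_, hlast⟩
  have hk := Nat.find_spec hex
  have hmin : ∀ j < Nat.find hex, a + (j : Fin (M + 2)) ∈ S := fun j hj => by
    simpa using Nat.find_min hex hj
  have hle : Nat.find hex ≤ M + 1 := Nat.find_min' hex hlast
  generalize Nat.find hex = k at hk hmin hle
  have hk1 : 1 ≤ k := by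
    rcases k with _ | k
    · simp at hk; exact absurd ha hk
    · omega
  refine ⟨a, k, hk1, hle, Finset.Subset.antisymm ?_ ?_⟩
  · have := closed_eq _ (S : Set _) (arc M a k : Set _) hS a (by simpa using ha)
      (by rw [Finset.mem_coe, mem_arc]; exact ⟨0, hk1, by simp⟩) ?_
    · exact_mod_cast this
    intro x hx y hy hxy
    rw [Finset.mem_coe] at hx hy ⊢
    obtain ⟨i, hi, rfl⟩ := mem_arc.1 hx
    rw [SimpleGraph.cycleGraph_adj] at hxy
    rcases hxy with h | h
    · rcases i with _ | i
      · exfalso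
        apply ha1
        have : y = a - 1 := by
          push_cast at h
          linear_combination -h
        rwa [← this]
      · rw [mem_arc]
        refine ⟨i, by omega, ?_⟩
        push_cast at h
        linear_combination h
    · have hy2 : y = a + ((i + 1 : ℕ) : Fin (M + 2)) := by
        push_cast
        linear_combination h
      rcases Nat.lt_or_ge (i + 1) k with h3 | h3
      · rw [mem_arc]; exact ⟨i + 1, h3, hy2.symm⟩
      · exfalso
        have : i + 1 = k := by omega
        rw [hy2, this] at hy
        exact hk hy
  · intro x hx
    obtain ⟨i, hi, rfl⟩ := mem_arc.1 hx
    exact hmin i hi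

theorem filter_eq (M : ℕ) :
    (Finset.univ.filter fun S : Finset (Fin (M + 2)) =>
      ((SimpleGraph.cycleGraph (M + 2)).induce (S : Set (Fin (M + 2)))).Connected) =
    insert Finset.univ (((Finset.univ : Finset (Fin (M + 2))) ×ˢ Finset.Icc 1 (M + 1)).image
      fun x => arc M x.1 x.2) := by
  ext S
  simp only [Finset.mem_filter, Finset.mem_univ, true_and, Finset.mem_insert, Finset.mem_image,
    Finset.mem_product, Finset.mem_Icc, Prod.exists]
  constructor
  · intro h
    by_cases hne : S = Finset.univ
    · exact Or.inl hne
    · obtain ⟨a, k, h1, h2, h3⟩ := connected_is_arc S h hne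
      exact Or.inr ⟨a, k, ⟨h1, h2⟩, h3.symm⟩
  · rintro (rfl | ⟨a, k, ⟨h1, h2⟩, rfl⟩)
    · have : (Finset.univ : Finset (Fin (M + 2))) = arc M 0 (M + 2) := by
        symm
        rw [← Finset.card_eq_iff_eq_univ, card_arc _ le_rfl, Fintype.card_fin]
      rw [this]
      exact arc_connected _ (by omega)
    · exact arc_connected _ h1

theorem nodeRel_cycle (M : ℕ) (p : ℝ) :
    nodeRelR (SimpleGraph.cycleGraph (M + 2)) p =
      p ^ (M + 2) + (M + 2) * ∑ k ∈ Finset.Icc 1 (M + 1), p ^ k * (1 - p) ^ (M + 2 - k) := by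
  unfold nodeRelR
  have hf := filter_eq M
  rw [Finset.sum_congr (s₂ := insert Finset.univ
    (((Finset.univ : Finset (Fin (M + 2))) ×ˢ Finset.Icc 1 (M + 1)).image
      fun x => arc M x.1 x.2)) (by rw [← hf]; congr!) (fun _ _ => rfl), Finset.sum_insert, Finset.sum_image, Finset.sum_product]
  · congr 1
    · simp
    · rw [Finset.sum_congr rfl (g := fun _ =>
        ∑ k ∈ Finset.Icc 1 (M + 1), p ^ k * (1 - p) ^ (M + 2 - k))]
      · simp
      · intro a _
        apply Finset.sum_congr rfl
        intro k hk
        rw [Finset.mem_Icc] at hk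
        simp only
        rw [card_arc a (by omega), Fintype.card_fin]
  · rintro ⟨a, k⟩ hx ⟨b, l⟩ hy h
    simp at hx hy
    obtain ⟨h1, h2⟩ := arc_inj hx.1 hx.2 hy.2 h
    exact Prod.ext h1 h2
  · simp only [Finset.mem_image, Finset.mem_product, Finset.mem_univ, true_and, Finset.mem_Icc,
      Prod.exists, not_exists, not_and]
    intro a k hk h
    have := card_arc a (by omega : k ≤ M + 2)
    rw [h] at this
    simp at this
    omega

end Arcs

theorem geom_aux (M : ℕ) (p q : ℝ) :
    (p - q) * ∑ k ∈ Finset.Icc 1 (M + 1), p ^ k * q ^ (M + 2 - k)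
      = p * q * (p ^ (M + 1) - q ^ (M + 1)) := by
  have h := (Commute.all p q).mul_geom_sum₂ (M + 1)
  rw [← h, ← mul_assoc, mul_comm (p * q), mul_assoc]
  congr 1
  rw [Finset.mul_sum]
  symm
  apply Finset.sum_bij (fun i _ => i + 1)
  · intro i hi; rw [Finset.mem_range] at hi; rw [Finset.mem_Icc]; omega
  · intro i _ j _ hij; omega
  · intro k hk
    rw [Finset.mem_Icc] at hk
    exact ⟨k - 1, by rw [Finset.mem_range]; omega, by omega⟩
  · intro i hi
    rw [Finset.mem_range] at hi
    rw [show M + 2 - (i + 1) = (M + 1 - 1 - i) + 1 by omega, pow_succ, pow_succ]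
    ring

theorem bern2 (x : ℝ) (hx : 0 ≤ x) (j : ℕ) :
    1 + j * x + j * (j - 1) / 2 * x ^ 2 ≤ (1 + x) ^ j := by
  induction j with
  | zero => simp
  | succ j ih =>
    rw [pow_succ]
    have h1 := mul_le_mul_of_nonneg_right ih (by linarith : 0 ≤ 1 + x)
    refine le_trans ?_ h1
    push_cast
    have h2 : (0 : ℝ) ≤ j * (j - 1) := by
      rcases j with _ | j
      · simp
      · push_cast; simp; positivity
    have h3 : 0 ≤ (j * (j - 1) : ℝ) * x ^ 3 := by positivity
    nlinarith

theorem ineq_aux (n : ℕ) (hn : 2 ≤ n) (m : ℝ) (hm : m = 2 * (n : ℝ) ^ 2 - 2) :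
    (2 * n + 1) * m * m ^ (2 * n) < (m + 1) ^ (2 * n) * ((2 * n - 1) * m - 1) := by
  have hn' : (2 : ℝ) ≤ n := by exact_mod_cast hn
  have hm0 : 0 < m := by nlinarith
  have hb := bern2 (1 / m) (by positivity) (2 * n)
  have he : (m + 1) ^ (2 * n) = (1 + 1 / m) ^ (2 * n) * m ^ (2 * n) := by
    rw [← mul_pow]; congr 1; field_simp
  have hP : (0 : ℝ) < (2 * n - 1) * m - 1 := by nlinarith
  have key : (2 * n + 1) * m < (1 + 1 / m) ^ (2 * n) * ((2 * n - 1) * m - 1) := by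
    refine lt_of_lt_of_le ?_ (mul_le_mul_of_nonneg_right hb hP.le)
    have : (1 + ((2 * n : ℕ) : ℝ) * (1 / m) + ((2 * n : ℕ) : ℝ) * (((2 * n : ℕ) : ℝ) - 1) / 2
        * (1 / m) ^ 2) = (m ^ 2 + 2 * n * m + n * (2 * n - 1)) / m ^ 2 := by
      push_cast; field_simp
    rw [this, div_mul_eq_mul_div, lt_div_iff₀ (by positivity)]
    obtain ⟨t, ht⟩ : ∃ t : ℝ, (n : ℝ) = t + 2 := ⟨n - 2, by ring⟩
    have ht0 : 0 ≤ t := by linarith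
    rw [hm, ht, ← sub_pos]
    ring_nf
    positivity
  rw [he]
  have := mul_lt_mul_of_pos_right key (by positivity : 0 < m ^ (2 * n))
  linarith

/-- For every n ≥ 2, the node reliability polynomial of the odd cycle C_{2n+1}
is strictly negative at p = 2n² - 1. -/
theorem cycle_nodeRel_neg_at :
    ∀ n : ℕ, 2 ≤ n →
      nodeRelR (SimpleGraph.cycleGraph (2 * n + 1)) (2 * (n : ℝ) ^ 2 - 1) < 0 := by
  intro n hn
  have hn' : (2 : ℝ) ≤ n := by exact_mod_cast hn
  obtain ⟨M, hM⟩ : ∃ M, 2 * n = M + 1 := ⟨2 * n - 1, by omega⟩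
  have hM' : (2 * n : ℝ) = M + 1 := by exact_mod_cast hM
  have hmain := ineq_aux n hn (2 * (n : ℝ) ^ 2 - 2) rfl
  rw [hM]
  rw [show M + 1 + 1 = M + 2 from rfl, nodeRel_cycle]
  have hg := geom_aux M (2 * (n : ℝ) ^ 2 - 1) (1 - (2 * (n : ℝ) ^ 2 - 1))
  have hq : (1 - (2 * (n : ℝ) ^ 2 - 1)) ^ (M + 1) = (2 * (n : ℝ) ^ 2 - 2) ^ (M + 1) := by
    rw [← hM, ← (even_two_mul n).neg_pow]; congr 1; ring
  rw [hq] at hg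
  rw [hM, show 2 * (n : ℝ) ^ 2 - 2 + 1 = 2 * (n : ℝ) ^ 2 - 1 by ring] at hmain
  have hMn : (M : ℝ) = 2 * n - 1 := by linarith
  rw [hMn]
  have hd : 0 < 4 * (n : ℝ) ^ 2 - 3 := by nlinarith
  have hp : 0 < 2 * (n : ℝ) ^ 2 - 1 := by nlinarith
  generalize (∑ k ∈ Finset.Icc 1 (M + 1), (2 * (n : ℝ) ^ 2 - 1) ^ k *
    (1 - (2 * (n : ℝ) ^ 2 - 1)) ^ (M + 2 - k)) = T at hg ⊢
  rw [show M + 2 = M + 1 + 1 from rfl, pow_succ]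
  generalize (2 * (n : ℝ) ^ 2 - 1) ^ (M + 1) = A at *
  generalize (2 * (n : ℝ) ^ 2 - 2) ^ (M + 1) = B at *
  refine neg_of_mul_neg_right (a := 4 * (n : ℝ) ^ 2 - 3) ?_ hd.le
  have h5 := mul_lt_mul_of_pos_left hmain hp
  have h6 : (4 * (n : ℝ) ^ 2 - 3) * (A * (2 * (n : ℝ) ^ 2 - 1) + (2 * n - 1 + 2) * T) =
    (2 * (n : ℝ) ^ 2 - 1) * ((2 * n + 1) * (2 * (n : ℝ) ^ 2 - 2) * B) -
    (2 * (n : ℝ) ^ 2 - 1) * (A * ((2 * n - 1) * (2 * (n : ℝ) ^ 2 - 2) - 1)) := by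
    linear_combination (2 * n + 1) * hg
  linarith
end

section
/- For every integer n ≥ 2, the node reliability polynomial of the cycle graph C_{2n+1} evaluated at the real number p = 2n² is strictly positive: NRel(C_{2n+1}; 2n²) > 0. -/
open scoped Classical

/-- The arc of length `k` starting at `a`. -/
noncomputable def cycArc {N : ℕ} (a : ZMod N) (k : ℕ) : Finset (ZMod N) :=
  (Finset.range k).image fun i : ℕ => a + (i : ZMod N)

lemma mem_cycArc {N : ℕ} (a : ZMod N) (k : ℕ) (x : ZMod N) :
    x ∈ cycArc a k ↔ ∃ i : ℕ, i < k ∧ a + (i : ZMod N) = x := by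
  simp [cycArc]

lemma cast_inj_lt {N : ℕ} {i j : ℕ} (hi : i < N) (hj : j < N)
    (h : (i : ZMod N) = (j : ZMod N)) : i = j := by
  have h2 := congrArg ZMod.val h
  rwa [ZMod.val_natCast_of_lt hi, ZMod.val_natCast_of_lt hj] at h2

lemma card_cycArc {N : ℕ} (a : ZMod N) (k : ℕ) (hk : k ≤ N) : (cycArc a k).card = k := by
  unfold cycArc
  rw [Finset.card_image_of_injOn, Finset.card_range]
  intro i hi j hj h
  simp only [Finset.coe_range, Set.mem_Iio] at hi hj
  exact cast_inj_lt (lt_of_lt_of_le hi hk) (lt_of_lt_of_le hj hk) (add_left_cancel h)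

lemma pred_not_mem_cycArc {N : ℕ} (a : ZMod N) (k : ℕ) (hk : k < N) :
    a - 1 ∉ cycArc a k := by
  rw [mem_cycArc]
  rintro ⟨j, hj, h⟩
  have h1 : ((j + 1 : ℕ) : ZMod N) = ((0 : ℕ) : ZMod N) := by
    push_cast
    linear_combination h
  have := cast_inj_lt (by omega) (by omega) h1
  omega

lemma cycArc_inj {N : ℕ} (a b : ZMod N) (k l : ℕ) (hk0 : 0 < k) (hk : k < N)
    (hl : l < N) (h : cycArc a k = cycArc b l) : a = b ∧ k = l := by
  refine ⟨?_, ?_⟩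
  · have ha : a ∈ cycArc b l := by
      rw [← h, mem_cycArc]
      exact ⟨0, hk0, by simp⟩
    obtain ⟨i, hi, hia⟩ := (mem_cycArc _ _ _).1 ha
    rcases i with _ | i
    · simpa using hia.symm
    · exfalso
      apply pred_not_mem_cycArc a k hk
      rw [h, mem_cycArc]
      refine ⟨i, by omega, ?_⟩
      push_cast at hia
      linear_combination hia
  · rw [← card_cycArc a k hk.le, h, card_cycArc b l hl.le]

lemma cycArc_connected {N : ℕ} (hN : 2 ≤ N) (G : SimpleGraph (ZMod N))
    (hG : ∀ u v, G.Adj u v ↔ u - v = 1 ∨ v - u = 1) (a : ZMod N) (k : ℕ) (hk : 0 < k) :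
    (G.induce (cycArc a k : Set (ZMod N))).Connected := by
  have ha : a ∈ cycArc a k := (mem_cycArc _ _ _).2 ⟨0, hk, by simp⟩
  have key : ∀ i : ℕ, ∀ hi : i < k, (G.induce (cycArc a k : Set (ZMod N))).Reachable
      ⟨a, ha⟩ ⟨a + (i : ZMod N), (mem_cycArc _ _ _).2 ⟨i, hi, rfl⟩⟩ := by
    intro i
    induction i with
    | zero =>
      intro hi
      have : (⟨a, ha⟩ : (cycArc a k : Set (ZMod N))) =
        ⟨a + ((0 : ℕ) : ZMod N), (mem_cycArc _ _ _).2 ⟨0, hi, rfl⟩⟩ := by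
        apply Subtype.ext; simp
      rw [← this]
    | succ i ih =>
      intro hi
      refine (ih (by omega)).trans (SimpleGraph.Adj.reachable ?_)
      rw [SimpleGraph.induce_adj, hG]
      right
      push_cast
      ring
  rw [SimpleGraph.connected_iff_exists_forall_reachable]
  refine ⟨⟨a, ha⟩, ?_⟩
  rintro ⟨x, hx⟩
  obtain ⟨i, hi, rfl⟩ := (mem_cycArc _ _ _).1 (Finset.mem_coe.1 hx)
  exact key i hi

lemma connected_is_cycArc {N : ℕ} [NeZero N] (G : SimpleGraph (ZMod N))
    (hG : ∀ u v, G.Adj u v ↔ u - v = 1 ∨ v - u = 1) (S : Finset (ZMod N))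
    (hS : (G.induce (S : Set (ZMod N))).Connected) (hne : S ≠ Finset.univ) :
    ∃ a k, 0 < k ∧ k < N ∧ S = cycArc a k := by
  obtain ⟨⟨s, hs⟩⟩ := hS.nonempty
  have h1 : ∃ a ∈ S, a - 1 ∉ S := by
    by_contra hcon
    push Not at hcon
    apply hne
    have h2 : ∀ i : ℕ, s - (i : ZMod N) ∈ S := by
      intro i
      induction i with
      | zero => simpa using hs
      | succ i ih =>
        have := hcon _ ih
        push_cast
        rwa [← sub_sub]
    ext x
    simp only [Finset.mem_univ, iff_true]
    have := h2 (s - x).val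
    rw [ZMod.natCast_zmod_val] at this
    simpa using this
  obtain ⟨a, ha, ha1⟩ := h1
  have hNpos : 0 < N := Nat.pos_of_ne_zero (NeZero.ne N)
  have hlast : a + ((N - 1 : ℕ) : ZMod N) ∉ S := by
    rw [Nat.cast_sub hNpos]
    simpa [← sub_eq_add_neg] using ha1
  have hex : ∃ k : ℕ, a + (k : ZMod N) ∉ S := ⟨N - 1, hlast⟩
  have hkle : Nat.find hex ≤ N - 1 := Nat.find_min' hex hlast
  have hkspec := Nat.find_spec hex
  have hkmin : ∀ m, m < Nat.find hex → a + (m : ZMod N) ∈ S := fun m hm => by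
    have := Nat.find_min hex hm
    simpa using this
  generalize Nat.find hex = k at *
  have hk0 : 0 < k := by
    rcases Nat.eq_zero_or_pos k with rfl | h
    · simp at hkspec
      exact absurd ha hkspec
    · exact h
  refine ⟨a, k, hk0, by omega, ?_⟩
  ext x
  constructor
  · intro hx
    have hr := hS.preconnected ⟨a, ha⟩ ⟨x, hx⟩
    rw [SimpleGraph.reachable_iff_reflTransGen] at hr
    have gen : ∀ y : (S : Set (ZMod N)),
        Relation.ReflTransGen (G.induce (S : Set (ZMod N))).Adj ⟨a, ha⟩ y →
        y.1 ∈ cycArc a k := by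
      intro y hy
      induction hy with
      | refl => exact (mem_cycArc _ _ _).2 ⟨0, hk0, by simp⟩
      | @tail b c hab hbc ih =>
        obtain ⟨i, hi, hib⟩ := (mem_cycArc _ _ _).1 ih
        rw [SimpleGraph.induce_adj, hG] at hbc
        have hc : c.1 ∈ S := c.2
        rcases hbc with h | h
        · rcases i with _ | i
          · exfalso
            apply ha1
            have : a - 1 = c.1 := by
              push_cast at hib
              linear_combination hib + h
            rwa [this]
          · refine (mem_cycArc _ _ _).2 ⟨i, by omega, ?_⟩
            push_cast at hib
            linear_combination hib + h
        · have hci : a + ((i + 1 : ℕ) : ZMod N) = c.1 := by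
            push_cast
            linear_combination hib - h
          refine (mem_cycArc _ _ _).2 ⟨i + 1, ?_, hci⟩
          by_contra hlt
          have : i + 1 = k := by omega
          rw [this] at hci
          rw [hci] at hkspec
          exact hkspec hc
    exact gen _ hr
  · intro hx
    obtain ⟨i, hi, rfl⟩ := (mem_cycArc _ _ _).1 hx
    exact hkmin i hi

lemma nodeRel_zmod {N : ℕ} [NeZero N] (hN : 2 ≤ N) (G : SimpleGraph (ZMod N))
    (hG : ∀ u v, G.Adj u v ↔ u - v = 1 ∨ v - u = 1) (p : ℝ) :
    nodeRelR G p = p ^ N + N * ∑ k ∈ Finset.Ioo 0 N, p ^ k * (1 - p) ^ (N - k) := by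
  have hset : (Finset.univ.filter fun S : Finset (ZMod N) =>
      (G.induce (S : Set (ZMod N))).Connected) =
      insert Finset.univ (((Finset.univ : Finset (ZMod N)) ×ˢ Finset.Ioo 0 N).image
        fun q => cycArc q.1 q.2) := by
    ext S
    simp only [Finset.mem_filter, Finset.mem_univ, true_and, Finset.mem_insert,
      Finset.mem_image, Finset.mem_product, Finset.mem_Ioo, Prod.exists]
    constructor
    · intro hS
      by_cases hne : S = Finset.univ
      · exact Or.inl hne
      · obtain ⟨a, k, h0, h1, h2⟩ := connected_is_cycArc G hG S hS hne
        exact Or.inr ⟨a, k, ⟨h0, h1⟩, h2.symm⟩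
    · rintro (rfl | ⟨a, k, ⟨h0, h1⟩, rfl⟩)
      · have : (Finset.univ : Finset (ZMod N)) = cycArc 0 N := by
          symm
          rw [← Finset.card_eq_iff_eq_univ, card_cycArc _ _ le_rfl, ZMod.card]
        rw [this]
        exact cycArc_connected hN G hG 0 N (by omega)
      · exact cycArc_connected hN G hG a k h0
  unfold nodeRelR
  refine (Finset.sum_congr (s₂ := insert Finset.univ
    (((Finset.univ : Finset (ZMod N)) ×ˢ Finset.Ioo 0 N).image fun q => cycArc q.1 q.2))
    (by convert hset) (fun _ _ => rfl)).trans ?_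
  rw [Finset.sum_insert, Finset.sum_image, Finset.sum_product]
  · rw [Finset.card_univ, ZMod.card]
    congr 1
    · simp
    · have hsum : ∀ a ∈ (Finset.univ : Finset (ZMod N)), ∑ k ∈ Finset.Ioo 0 N,
          p ^ (cycArc a k).card * (1 - p) ^ (N - (cycArc a k).card) =
          ∑ k ∈ Finset.Ioo 0 N, p ^ k * (1 - p) ^ (N - k) := by
        intro a _
        apply Finset.sum_congr rfl
        intro k hk
        rw [card_cycArc a k (Finset.mem_Ioo.1 hk).2.le]
      rw [Finset.sum_congr rfl hsum, Finset.sum_const, Finset.card_univ, ZMod.card,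
        nsmul_eq_mul]
  · rintro ⟨a, k⟩ h ⟨b, l⟩ h' heq
    simp only [Finset.coe_product, Set.mem_prod, Finset.coe_Ioo, Set.mem_Ioo] at h h'
    obtain ⟨h1, h2⟩ := cycArc_inj a b k l h.2.1 h.2.2 h'.2.2 heq
    rw [h1, h2]
  · simp only [Finset.mem_image, Finset.mem_product, Finset.mem_Ioo, Prod.exists, not_exists]
    rintro a k ⟨⟨-, h0, h1⟩, h2⟩
    have := card_cycArc a k h1.le
    rw [h2, Finset.card_univ, ZMod.card] at this
    omega

lemma bern3 (x : ℝ) (hx0 : 0 ≤ x) (hx1 : x ≤ 1) (k : ℕ) :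
    1 - k * x + k * (k - 1) / 2 * x ^ 2 - k * (k - 1) * (k - 2) / 6 * x ^ 3 ≤ (1 - x) ^ k := by
  induction k with
  | zero => simp
  | succ k ih =>
    have h := mul_le_mul_of_nonneg_right ih (sub_nonneg.2 hx1)
    rw [pow_succ]
    refine le_trans ?_ h
    have hk : (0 : ℝ) ≤ k * (k - 1) * (k - 2) := by
      rcases k with _ | _ | k
      · simp
      · simp
      · push_cast
        have : (0 : ℝ) ≤ k := Nat.cast_nonneg k
        have e : ((k : ℝ) + 1 + 1) * (k + 1 + 1 - 1) * (k + 1 + 1 - 2) =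
          (k + 2) * (k + 1) * k := by ring
        rw [e]
        positivity
    have h4 := mul_nonneg hk (pow_nonneg hx0 4)
    push_cast
    nlinarith [h4]

lemma geom_part (p q : ℝ) (N : ℕ) (hN : 1 ≤ N) :
    (p - q) * ∑ k ∈ Finset.Ioo 0 N, p ^ k * q ^ (N - k) =
      p * q * (p ^ (N - 1) - q ^ (N - 1)) := by
  obtain ⟨m, rfl⟩ : ∃ m, N = m + 1 := ⟨N - 1, by omega⟩
  have e : ∑ k ∈ Finset.Ioo 0 (m + 1), p ^ k * q ^ (m + 1 - k) =
      p * q * ∑ i ∈ Finset.range m, p ^ i * q ^ (m - 1 - i) := by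
    have : Finset.Ioo 0 (m + 1) = Finset.Ico (0 + 1) (m + 1) := by ext; simp; omega
    rw [this, ← Finset.sum_Ico_add' (fun k => p ^ k * q ^ (m + 1 - k)) 0 m 1,
      Finset.mul_sum, Finset.range_eq_Ico]
    apply Finset.sum_congr rfl
    intro i hi
    have : i < m := (Finset.mem_Ico.1 hi).2
    have e2 : m + 1 - (i + 1) = (m - 1 - i) + 1 := by omega
    rw [e2]
    ring
  rw [e]
  have := (Commute.all p q).geom_sum₂_mul m
  simp only [Nat.add_sub_cancel]
  linear_combination p * q * this

/-- For every n ≥ 2, the node reliability polynomial of the odd cycle C_{2n+1}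
is strictly positive at p = 2n². -/
theorem cycle_nodeRel_pos_at :
    ∀ n : ℕ, 2 ≤ n →
      0 < nodeRelR (SimpleGraph.cycleGraph (2 * n + 1)) (2 * (n : ℝ) ^ 2) := by
  intro n hn
  obtain ⟨m, rfl⟩ : ∃ m, n = m + 1 := ⟨n - 1, by omega⟩
  have key : nodeRelR (SimpleGraph.cycleGraph (2 * (m + 1) + 1)) (2 * ((m + 1 : ℕ) : ℝ) ^ 2) = _ :=
    nodeRel_zmod (N := 2 * (m + 1) + 1) (by omega) (SimpleGraph.cycleGraph (2 * (m + 1) + 1))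
      (fun u v => SimpleGraph.cycleGraph_adj) (2 * ((m + 1 : ℕ) : ℝ) ^ 2)
  rw [key]
  generalize m + 1 = n at *
  have hn2 : (2 : ℝ) ≤ n := by exact_mod_cast hn
  have hg := geom_part (2 * (n : ℝ) ^ 2) (1 - 2 * (n : ℝ) ^ 2) (2 * n + 1) (by omega)
  generalize ∑ k ∈ Finset.Ioo 0 (2 * n + 1), (2 * (n : ℝ) ^ 2) ^ k *
    (1 - 2 * (n : ℝ) ^ 2) ^ (2 * n + 1 - k) = T at *
  simp only [Nat.add_sub_cancel] at hg
  set p : ℝ := 2 * (n : ℝ) ^ 2 with hp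
  have hp0 : 0 < p := by positivity
  have hp1 : 1 ≤ p := by nlinarith
  have hb := bern3 (1 / p) (by positivity) (by rw [div_le_one hp0]; exact hp1) (2 * n)
  have e1 : (1 - 1 / p) ^ (2 * n) * p ^ (2 * n) = (1 - p) ^ (2 * n) := by
    rw [← mul_pow]
    have : (1 - 1 / p) * p = -(1 - p) := by field_simp; ring
    rw [this, Even.neg_pow (even_two_mul n)]
  have hP : 0 < p ^ (2 * n) := by positivity
  -- main inequality
  have hmain : (p - 1) * (1 - (1 - 1 / p) ^ (2 * n)) < 2 * n - 1 := by
    have h1 := mul_le_mul_of_nonneg_left hb (sub_nonneg.2 hp1)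
    refine lt_of_le_of_lt (b := (p - 1) * (1 - (1 - ((2 * n : ℕ) : ℝ) * (1 / p) +
      ((2 * n : ℕ) : ℝ) * (((2 * n : ℕ) : ℝ) - 1) / 2 * (1 / p) ^ 2 -
      ((2 * n : ℕ) : ℝ) * (((2 * n : ℕ) : ℝ) - 1) * (((2 * n : ℕ) : ℝ) - 2) / 6 *
      (1 / p) ^ 3))) (by linarith) ?_
    push_cast
    rw [← sub_pos]
    have hn0 : (n : ℝ) ≠ 0 := by positivity
    have hQ : (0 : ℝ) < (2 * n ^ 4 + 3 * n ^ 2 - 3 * n + 1) / (12 * n ^ 5) := by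
      apply div_pos _ (by positivity)
      have : (0 : ℝ) < (n : ℝ) ^ 4 := by positivity
      nlinarith
    refine lt_of_lt_of_eq hQ ?_
    rw [hp]
    field_simp
    ring
  have hT : ((2 * n + 1 : ℕ) : ℝ) * T * (2 * n - 1) =
      p * (1 - p) * (p ^ (2 * n) - (1 - p) ^ (2 * n)) := by
    rw [← hg]
    push_cast
    rw [hp]
    ring
  have hfin : 0 < (p ^ (2 * n + 1) + ((2 * n + 1 : ℕ) : ℝ) * T) * (2 * n - 1) := by
    rw [add_mul, hT, ← e1]
    have : p ^ (2 * n + 1) * (2 * n - 1) + p * (1 - p) * (p ^ (2 * n) -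
      (1 - 1 / p) ^ (2 * n) * p ^ (2 * n)) = p * p ^ (2 * n) *
      ((2 * n - 1) - (p - 1) * (1 - (1 - 1 / p) ^ (2 * n))) := by ring
    rw [this]
    exact mul_pos (mul_pos hp0 hP) (sub_pos.2 hmain)
  exact pos_of_mul_pos_left hfin (by linarith)
end

section
/- Let G be a finite simple graph and K_m the complete graph on m vertices. Then the connected set polynomial of the lexicographic product G·K_m satisfies C(G·K_m; x) = C(G; (x+1)^m − 1) for all complex x. -/
open scoped Classical

/-- The connected set polynomial `C(G;x) = ∑_{k=1}^n c_k x^k`, at a complex argument. -/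
noncomputable def connPoly {V : Type*} [Fintype V] (G : SimpleGraph V) (x : ℂ) : ℂ :=
  ∑ k ∈ Finset.Icc 1 (Fintype.card V), (connCount G k : ℂ) * x ^ k

/-- The lexicographic product of two simple graphs: `(u,x)` and `(v,y)` are adjacent iff
`u ~ v` in `G`, or `u = v` and `x ~ y` in `H`. -/
def lexProd {α β : Type*} (G : SimpleGraph α) (H : SimpleGraph β) :
    SimpleGraph (α × β) where
  Adj p q := G.Adj p.1 q.1 ∨ (p.1 = q.1 ∧ H.Adj p.2 q.2)
  symm := by
    refine ⟨?_⟩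
    rintro p q (h | ⟨h1, h2⟩)
    · exact Or.inl h.symm
    · exact Or.inr ⟨h1.symm, h2.symm⟩
  loopless := by
    refine ⟨?_⟩
    rintro p (h | ⟨-, h⟩)
    · exact G.loopless.irrefl _ h
    · exact H.loopless.irrefl _ h

theorem connPoly_eq_sum {V : Type*} [Fintype V] (G : SimpleGraph V) (x : ℂ) :
    connPoly G x = ∑ S : Finset V,
      if (G.induce (S : Set V)).Connected then x ^ S.card else 0 := by
  unfold connPoly connCount
  have h : ∀ S : Finset V,
      (if (G.induce (S : Set V)).Connected then x ^ S.card else 0) =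
      ∑ k ∈ Finset.Icc 1 (Fintype.card V),
        if S.card = k ∧ (G.induce (S : Set V)).Connected then x ^ k else 0 := by
    intro S
    by_cases hS : (G.induce (S : Set V)).Connected
    · have hne : S.Nonempty := by
        obtain ⟨v⟩ := hS.nonempty
        exact ⟨v.1, v.2⟩
      have h1 : S.card ∈ Finset.Icc 1 (Fintype.card V) :=
        Finset.mem_Icc.2 ⟨hne.card_pos, Finset.card_le_univ S⟩
      simp only [hS, and_true, if_true]
      rw [Finset.sum_ite_eq, if_pos h1]
    · simp [hS]
  rw [Finset.sum_congr rfl (fun S _ => h S), Finset.sum_comm]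
  refine Finset.sum_congr rfl fun k _ => ?_
  rw [← Finset.sum_filter, Finset.sum_const, nsmul_eq_mul]

theorem lexProd_conn_iff {α : Type*} (G : SimpleGraph α) (m : ℕ)
    (T : Finset (α × Fin m)) :
    ((lexProd G (⊤ : SimpleGraph (Fin m))).induce (T : Set (α × Fin m))).Connected ↔
      (G.induce ((T.image Prod.fst : Finset α) : Set α)).Connected := by
  have hmem : ∀ p : α × Fin m, p ∈ (T : Set (α × Fin m)) →
      p.1 ∈ ((T.image Prod.fst : Finset α) : Set α) := by
    intro p hp
    exact Finset.mem_coe.2 (Finset.mem_image_of_mem _ (Finset.mem_coe.1 hp))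
  have hlift : ∀ u : ((T.image Prod.fst : Finset α) : Set α),
      ∃ p : (T : Set (α × Fin m)), p.1.1 = u.1 := by
    rintro ⟨u, hu⟩
    obtain ⟨p, hp, rfl⟩ := Finset.mem_image.1 (Finset.mem_coe.1 hu)
    exact ⟨⟨p, hp⟩, rfl⟩
  constructor
  · intro h
    have key : ∀ p q : (T : Set (α × Fin m)),
        ((lexProd G (⊤ : SimpleGraph (Fin m))).induce (T : Set (α × Fin m))).Walk p q →
        (G.induce ((T.image Prod.fst : Finset α) : Set α)).Reachable
          ⟨p.1.1, hmem _ p.2⟩ ⟨q.1.1, hmem _ q.2⟩ := by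
      intro p q w
      induction w with
      | nil => exact SimpleGraph.Reachable.refl _
      | cons hadj _ ih =>
        refine SimpleGraph.Reachable.trans ?_ ih
        rcases hadj with h | ⟨h, -⟩
        · exact SimpleGraph.Adj.reachable h
        · have h' : ∀ (a b : α) (ha : a ∈ ((T.image Prod.fst : Finset α) : Set α))
              (hb : b ∈ ((T.image Prod.fst : Finset α) : Set α)), a = b →
              (G.induce ((T.image Prod.fst : Finset α) : Set α)).Reachable
                ⟨a, ha⟩ ⟨b, hb⟩ := by
            rintro a _ ha hb rfl
            exact SimpleGraph.Reachable.refl _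
          exact h' _ _ _ _ h
    obtain ⟨p0⟩ := h.nonempty
    haveI : Nonempty ((T.image Prod.fst : Finset α) : Set α) := ⟨⟨_, hmem _ p0.2⟩⟩
    refine SimpleGraph.Connected.mk ?_
    rintro u v
    obtain ⟨p, hp⟩ := hlift u
    obtain ⟨q, hq⟩ := hlift v
    obtain ⟨w⟩ := h.preconnected p q
    have := key p q w
    convert this using 1
    · exact Subtype.ext hp.symm
    · exact Subtype.ext hq.symm
  · intro h
    have key : ∀ u v : ((T.image Prod.fst : Finset α) : Set α),
        (G.induce ((T.image Prod.fst : Finset α) : Set α)).Walk u v →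
        ∀ p q : (T : Set (α × Fin m)), p.1.1 = u.1 → q.1.1 = v.1 →
        ((lexProd G (⊤ : SimpleGraph (Fin m))).induce (T : Set (α × Fin m))).Reachable p q := by
      intro u v w
      induction w with
      | nil =>
        intro p q hp hq
        by_cases hpq : p = q
        · rw [hpq]
        · refine SimpleGraph.Adj.reachable (Or.inr ⟨hp.trans hq.symm, fun h2 => hpq ?_⟩)
          exact Subtype.ext (Prod.ext (hp.trans hq.symm) h2)
      | @cons a b c hadj _ ih =>
        intro p q hp hq
        obtain ⟨r, hr⟩ := hlift b
        refine SimpleGraph.Reachable.trans (SimpleGraph.Adj.reachable (Or.inl ?_))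
          (ih r q hr hq)
        change G.Adj p.1.1 r.1.1
        rw [hp, hr]
        exact hadj
    obtain ⟨u0⟩ := h.nonempty
    obtain ⟨p0, -⟩ := hlift u0
    haveI : Nonempty (T : Set (α × Fin m)) := ⟨p0⟩
    refine SimpleGraph.Connected.mk ?_
    rintro p q
    obtain ⟨w⟩ := h.preconnected ⟨_, hmem _ p.2⟩ ⟨_, hmem _ q.2⟩
    exact key _ _ w p q rfl rfl

/-- Subsets of a product as families of fibres. -/
noncomputable def fibreEquiv (α : Type*) [Fintype α] (m : ℕ) :
    Finset (α × Fin m) ≃ (α → Finset (Fin m)) where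
  toFun T a := Finset.univ.filter fun i => (a, i) ∈ T
  invFun g := Finset.univ.filter fun p => p.2 ∈ g p.1
  left_inv T := by ext p; simp
  right_inv g := by ext a i; simp

theorem fibre_sum {α : Type*} [Fintype α] (m : ℕ) (x : ℂ) (S : Finset α) :
    ∑ T : Finset (α × Fin m), (if T.image Prod.fst = S then x ^ T.card else 0) =
      ((x + 1) ^ m - 1) ^ S.card := by
  have h1 : ∀ T : Finset (α × Fin m),
      (if T.image Prod.fst = S then x ^ T.card else 0) =
      ∏ a : α, (if (a ∈ S ↔ (fibreEquiv α m T a).Nonempty)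
        then x ^ (fibreEquiv α m T a).card else 0) := by
    intro T
    have hn : ∀ a, (fibreEquiv α m T a).Nonempty ↔ a ∈ T.image Prod.fst := by
      intro a
      simp [fibreEquiv, Finset.Nonempty]
    have hc : T.card = ∑ a : α, (fibreEquiv α m T a).card := by
      rw [Finset.card_eq_sum_card_fiberwise (f := Prod.fst) (t := Finset.univ)
        (fun _ _ => Finset.mem_coe.2 (Finset.mem_univ _))]
      refine Finset.sum_congr rfl fun a _ => ?_
      symm
      refine Finset.card_bij (fun i _ => (a, i)) ?_ ?_ ?_
      · intro i hi
        simpa [fibreEquiv] using hi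
      · intro i _ j _ h
        exact (Prod.mk.inj h).2
      · rintro ⟨b, i⟩ hb
        simp only [Finset.mem_filter] at hb
        obtain ⟨hb, rfl⟩ := hb
        exact ⟨i, by simpa [fibreEquiv] using hb, rfl⟩
    by_cases h : T.image Prod.fst = S
    · rw [if_pos h, hc, ← Finset.prod_pow_eq_pow_sum]
      refine Finset.prod_congr rfl fun a _ => ?_
      rw [if_pos]
      rw [hn, h]
    · rw [if_neg h]
      have : ∃ a, ¬ (a ∈ S ↔ a ∈ T.image Prod.fst) := by
        by_contra hcon
        push Not at hcon
        exact h (Finset.ext fun a => (hcon a).symm)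
      obtain ⟨a, ha⟩ := this
      symm
      refine Finset.prod_eq_zero (Finset.mem_univ a) ?_
      rw [if_neg]
      rwa [hn]
  have hall : ∑ A : Finset (Fin m), x ^ A.card = (x + 1) ^ m := by
    have := Fintype.sum_pow_mul_eq_add_pow (Fin m) x 1
    simpa using this
  rw [Finset.sum_congr rfl (fun T _ => h1 T),
    Equiv.sum_comp (fibreEquiv α m) (fun g => ∏ a : α, (if (a ∈ S ↔ (g a).Nonempty)
        then x ^ (g a).card else 0)),
    ← Fintype.prod_sum (fun (a : α) (A : Finset (Fin m)) =>
      if (a ∈ S ↔ A.Nonempty) then x ^ A.card else 0)]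
  have h2 : ∀ a : α, (∑ A : Finset (Fin m),
      if (a ∈ S ↔ A.Nonempty) then x ^ A.card else 0) =
      if a ∈ S then (x + 1) ^ m - 1 else 1 := by
    intro a
    by_cases ha : a ∈ S
    · simp only [ha, true_iff, if_true]
      rw [← hall, eq_sub_iff_add_eq,
        ← Finset.sum_erase_add _ _ (Finset.mem_univ (∅ : Finset (Fin m))),
        ← Finset.sum_erase_add (a := (∅ : Finset (Fin m))) _ _ (Finset.mem_univ _)]
      simp only [Finset.not_nonempty_empty, if_false, Finset.card_empty, pow_zero, add_zero]
      congr 1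
      refine Finset.sum_congr rfl fun A hA => ?_
      rw [if_pos (Finset.nonempty_iff_ne_empty.2 (Finset.ne_of_mem_erase hA))]
    · simp [ha, Finset.not_nonempty_iff_eq_empty]
  rw [Finset.prod_congr rfl (fun a _ => h2 a)]
  simp [Finset.prod_ite]

/-- The connected set polynomial of the lexicographic product with a complete graph:
`C(G*K_m;x) = C(G;(x+1)^m-1)`. -/
theorem connPoly_lexProd_complete {α : Type*} [Fintype α] (G : SimpleGraph α) (m : ℕ)
    (x : ℂ) :
    connPoly (lexProd G (⊤ : SimpleGraph (Fin m))) x =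
      connPoly G ((x + 1) ^ m - 1) := by
  rw [connPoly_eq_sum, connPoly_eq_sum]
  have h : ∀ S : Finset α,
      (if (G.induce (S : Set α)).Connected then ((x + 1) ^ m - 1) ^ S.card else 0) =
      ∑ T : Finset (α × Fin m), if T.image Prod.fst = S then
        (if (G.induce (S : Set α)).Connected then x ^ T.card else 0) else 0 := by
    intro S
    rw [← fibre_sum m x S]
    by_cases hS : (G.induce (S : Set α)).Connected
    · simp only [hS, if_true]
    · simp [hS]
  rw [Finset.sum_congr rfl (fun S _ => h S), Finset.sum_comm]
  refine Finset.sum_congr rfl fun T _ => ?_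
  rw [Finset.sum_ite_eq, if_pos (Finset.mem_univ _)]
  simp only [lexProd_conn_iff]
end
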